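/- arXiv:1005.0786 — 2 statements merged into one kernel-verified Lean document; each statement's English description precedes it below -/
import Mathlib

section
/- Let (A, m_A) be a Noetherian local ring and (R, m_R) a Noetherian local A-algebra, flat over A, such that the fiber ring R' = R / m_A R is a regular local ring. Let a_1, …, a_r ∈ R be elements whose images in R' form part of a regular system of parameters of R'. Then a_1, …, a_r is a regular sequence in R, and R/(a_1, …, a_r) is flat over A. -/
open IsLocalRing

/-!
A regular system of parameters `x :: l` of `S` is a regular sequence as soon as `S` is a domain,
because `l` is again a regular system of parameters of `S ⧸ (x)`. For the domain property, choose a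
prime `q` with `dim S ⧸ q = dim S`; counting dimensions, `x ∉ q`, and the surjection from the domain
`S ⧸ (x)` onto `(S ⧸ q) ⧸ (x)` cannot lower the dimension, so it is injective and `q ⊆ (x)`.
As `x ∉ q`, this forces `q = x q`, hence `q = 0` by Nakayama.

To pass from the fiber to a flat module `M`, let `u` be regular on `M ⊗ A ⧸ 𝔪`. By flatness and
dévissage `u` is regular on `M ⊗ N` for `N` of finite length, and by Krull's intersection theorem
for every finite `N`. Taking `N = A` shows that `u` is regular on `M`, and taking `N = A ⧸ I`
amounts to the vanishing of `Tor₁ (M ⧸ u M) (A ⧸ I)`, that is, to the flatness of `M ⧸ u M`.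
-/

open RingTheory.Sequence
open scoped TensorProduct Pointwise

section DimensionTheory

theorem exists_isPrime_ringKrullDim_quotient_eq (S : Type*) [CommRing S] [FiniteRingKrullDim S] :
    ∃ q : Ideal S, q.IsPrime ∧ ringKrullDim (S ⧸ q) = ringKrullDim S := by
  let chain := LTSeries.longestOf (PrimeSpectrum S)
  refine ⟨chain.head.asIdeal, chain.head.2, (ringKrullDim_quotient_le _).antisymm ?_⟩
  have zeroLocus_eq : PrimeSpectrum.zeroLocus (chain.head.asIdeal : Set S) = Set.Ici chain.head :=
    rfl
  rw [ringKrullDim_quotient, zeroLocus_eq, ← Order.coheight_eq_krullDim_Ici, ringKrullDim,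
    Order.krullDim_eq_length_of_finiteDimensionalOrder]
  exact_mod_cast Order.length_le_coheight_head

theorem injective_of_surjective_of_ringKrullDim_le {T U : Type*} [CommRing T] [IsDomain T]
    [FiniteRingKrullDim T] [CommRing U] (f : T →+* U) (hf : Function.Surjective f)
    (hdim : ringKrullDim T ≤ ringKrullDim U) : Function.Injective f := by
  rw [injective_iff_map_eq_zero]
  intro y hy
  by_contra hy0
  have drop : ringKrullDim U + 1 ≤ ringKrullDim T :=
    ringKrullDim_succ_le_of_surjective f hf (mem_nonZeroDivisors_of_ne_zero hy0) hy
  have dim_eq := Order.krullDim_eq_length_of_finiteDimensionalOrder (α := PrimeSpectrum T)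
  rw [← ringKrullDim] at dim_eq
  rw [dim_eq] at drop hdim
  exact (ENat.WithBot.add_one_le_natCast_iff.mp drop).not_ge hdim

variable {S : Type*} [CommRing S] [IsLocalRing S]

theorem isLocalRing_quotient_of_le_maximalIdeal {I : Ideal S} (hI : I ≤ maximalIdeal S) :
    IsLocalRing (S ⧸ I) := by
  have := Ideal.Quotient.nontrivial_iff.mpr
    (hI.trans_lt (maximalIdeal.isMaximal S).ne_top.lt_top).ne
  exact .of_surjective' _ Ideal.Quotient.mk_surjective

variable [IsNoetherianRing S]

theorem ringKrullDim_le_length_of_ofList_eq_maximalIdeal {l : List S}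
    (h : Ideal.ofList l = maximalIdeal S) : ringKrullDim S ≤ l.length := by
  classical
  have spanFinrank_le : (maximalIdeal S).spanFinrank ≤ l.length := by
    rw [← h, Ideal.ofList, ← l.coe_toFinset]
    exact (Submodule.spanFinrank_span_le_ncard_of_finite l.toFinset.finite_toSet).trans
      ((Set.ncard_coe_finset _).trans_le l.toFinset_card_le)
  exact (ringKrullDim_le_spanFinrank_maximalIdeal S).trans (mod_cast spanFinrank_le)

theorem ringKrullDim_le_ringKrullDim_quotient_span_singleton_add_one {x : S}
    (hx : x ∈ maximalIdeal S) : ringKrullDim S ≤ ringKrullDim (S ⧸ Ideal.span {x}) + 1 := by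
  rw [← maximalIdeal_height_eq_ringKrullDim]
  exact Ideal.height_le_ringKrullDim_quotient_add_one hx

theorem eq_bot_of_isPrime_of_le_span_singleton {x : S} {q : Ideal S} [hq : q.IsPrime]
    (hx : x ∈ maximalIdeal S) (hxq : x ∉ q) (hle : q ≤ Ideal.span {x}) : q = ⊥ := by
  refine Submodule.eq_bot_of_le_smul_of_le_jacobson_bot (maximalIdeal S) q
    (IsNoetherian.noetherian _) ?_ (maximalIdeal_le_jacobson _)
  intro y hy
  obtain ⟨z, rfl⟩ := Ideal.mem_span_singleton.mp (hle hy)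
  exact Submodule.smul_mem_smul hx ((hq.mem_or_mem hy).resolve_left hxq)

end DimensionTheory

section RegularSystemOfParameters

variable {S : Type*} [CommRing S] [IsLocalRing S]

/-- A regular system of parameters of a local ring: a list of `dim S` generators of the maximal
ideal. It is a list rather than a set so that it can be compared with regular sequences. -/
structure IsRegularSystemOfParameters (l : List S) : Prop where
  ofList_eq : Ideal.ofList l = maximalIdeal S
  ringKrullDim_eq : ringKrullDim S = l.length

namespace IsRegularSystemOfParameters

variable {x : S} {l : List S}

theorem mem_maximalIdeal (h : IsRegularSystemOfParameters l) (hx : x ∈ l) : x ∈ maximalIdeal S :=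
  h.ofList_eq ▸ Ideal.subset_span hx

theorem isLocalRing_quotient_head (h : IsRegularSystemOfParameters (x :: l)) :
    IsLocalRing (S ⧸ Ideal.span {x}) :=
  isLocalRing_quotient_of_le_maximalIdeal <|
    (Ideal.span_singleton_le_iff_mem _).mpr (h.mem_maximalIdeal List.mem_cons_self)

variable [IsNoetherianRing S]

theorem quotient_head (h : IsRegularSystemOfParameters (x :: l))
    [IsLocalRing (S ⧸ Ideal.span {x})] :
    IsRegularSystemOfParameters (l.map (Ideal.Quotient.mk (Ideal.span {x}))) := by
  have generates : Ideal.ofList (l.map (Ideal.Quotient.mk (Ideal.span {x}))) =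
      maximalIdeal (S ⧸ Ideal.span {x}) := by
    rw [← map_maximalIdeal_of_surjective _ Ideal.Quotient.mk_surjective, ← h.ofList_eq,
      Ideal.ofList_cons, Ideal.map_sup, Ideal.map_quotient_self, bot_sup_eq, Ideal.map_ofList]
  refine ⟨generates, (ringKrullDim_le_length_of_ofList_eq_maximalIdeal generates).antisymm ?_⟩
  have dim_le := ringKrullDim_le_ringKrullDim_quotient_span_singleton_add_one
    (h.mem_maximalIdeal List.mem_cons_self)
  rw [h.ringKrullDim_eq, List.length_cons, Nat.cast_add_one] at dim_le
  rw [List.length_map]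
  exact ENat.WithBot.add_le_add_one_right_iff.mp dim_le

theorem head_notMem_of_ringKrullDim_quotient_eq (h : IsRegularSystemOfParameters (x :: l))
    {q : Ideal S} (hq : ringKrullDim (S ⧸ q) = ringKrullDim S) : x ∉ q := by
  intro hx
  have := h.isLocalRing_quotient_head
  have dim_le : ringKrullDim (S ⧸ q) ≤ ringKrullDim (S ⧸ Ideal.span {x}) :=
    ringKrullDim_le_of_surjective _
      (Ideal.Quotient.factor_surjective ((Ideal.span_singleton_le_iff_mem q).mpr hx))
  rw [hq, h.ringKrullDim_eq, h.quotient_head.ringKrullDim_eq, List.length_map,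
    List.length_cons] at dim_le
  norm_cast at dim_le
  omega

theorem head_ne_zero (h : IsRegularSystemOfParameters (x :: l)) : x ≠ 0 :=
  h.head_notMem_of_ringKrullDim_quotient_eq (q := ⊥)
    (ringKrullDim_eq_of_ringEquiv (RingEquiv.quotientBot S))

theorem le_span_head_of_ringKrullDim_quotient_eq [IsDomain (S ⧸ Ideal.span {x})]
    (h : IsRegularSystemOfParameters (x :: l)) {q : Ideal S} [q.IsPrime]
    (hq : ringKrullDim (S ⧸ q) = ringKrullDim S) : q ≤ Ideal.span {x} := by
  have := h.isLocalRing_quotient_head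
  have := isLocalRing_quotient_of_le_maximalIdeal (le_maximalIdeal (J := q) Ideal.IsPrime.ne_top')
  have hx : Ideal.Quotient.mk q x ∈ maximalIdeal (S ⧸ q) := by
    rw [← map_maximalIdeal_of_surjective _ Ideal.Quotient.mk_surjective]
    exact Ideal.mem_map_of_mem _ (h.mem_maximalIdeal List.mem_cons_self)
  have dim_le : ringKrullDim (S ⧸ Ideal.span {x}) ≤
      ringKrullDim ((S ⧸ q) ⧸ Ideal.span {Ideal.Quotient.mk q x}) := by
    have dim_le_add_one := ringKrullDim_le_ringKrullDim_quotient_span_singleton_add_one hx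
    rw [hq, h.ringKrullDim_eq, List.length_cons, Nat.cast_add_one] at dim_le_add_one
    rw [h.quotient_head.ringKrullDim_eq, List.length_map]
    exact ENat.WithBot.add_le_add_one_right_iff.mp dim_le_add_one
  let f : S ⧸ Ideal.span {x} →+* (S ⧸ q) ⧸ Ideal.span {Ideal.Quotient.mk q x} :=
    Ideal.quotientMap _ (Ideal.Quotient.mk q) <|
      (Ideal.span_singleton_le_iff_mem _).mpr (Ideal.mem_span_singleton_self _)
  have f_injective : Function.Injective f := injective_of_surjective_of_ringKrullDim_le f
    (Ideal.quotientMap_surjective Ideal.Quotient.mk_surjective) dim_le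
  intro y hy
  rw [← Ideal.Quotient.eq_zero_iff_mem]
  apply f_injective
  rw [map_zero, Ideal.quotientMap_mk, Ideal.Quotient.eq_zero_iff_mem.mpr hy, map_zero]

theorem isDomain (h : IsRegularSystemOfParameters l) : IsDomain S := by
  induction hn : l.length generalizing S with
  | zero =>
    have maximalIdeal_eq := h.ofList_eq
    rw [List.eq_nil_of_length_eq_zero hn, Ideal.ofList_nil] at maximalIdeal_eq
    exact (isField_iff_maximalIdeal_eq.mpr maximalIdeal_eq.symm).isDomain
  | succ n ih =>
    obtain ⟨x, l, rfl⟩ := List.exists_cons_of_length_eq_add_one hn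
    have := h.isLocalRing_quotient_head
    have : IsDomain (S ⧸ Ideal.span {x}) := ih h.quotient_head (by simpa using hn)
    obtain ⟨q, _, dim_eq⟩ := exists_isPrime_ringKrullDim_quotient_eq S
    have q_eq : q = ⊥ := eq_bot_of_isPrime_of_le_span_singleton
      (h.mem_maximalIdeal List.mem_cons_self) (h.head_notMem_of_ringKrullDim_quotient_eq dim_eq)
      (h.le_span_head_of_ringKrullDim_quotient_eq dim_eq)
    subst q_eq
    exact .of_bot_isPrime S

theorem isWeaklyRegular (h : IsRegularSystemOfParameters l) : IsWeaklyRegular S l := by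
  induction hn : l.length generalizing S with
  | zero => exact List.eq_nil_of_length_eq_zero hn ▸ .nil S S
  | succ n ih =>
    obtain ⟨x, l, rfl⟩ := List.exists_cons_of_length_eq_add_one hn
    have := h.isDomain
    have := h.isLocalRing_quotient_head
    have tail_regular : IsWeaklyRegular (S ⧸ Ideal.span {x}) l :=
      (isWeaklyRegular_map_algebraMap_iff _ _ l).mp (ih h.quotient_head (by simpa using hn))
    refine .cons (.of_ne_zero h.head_ne_zero) <|
      ((Submodule.quotEquivOfEq _ (Ideal.span {x}) ?_).isWeaklyRegular_congr l).mpr tail_regular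
    rw [← Submodule.ideal_span_singleton_smul, smul_eq_mul, Ideal.mul_top]

end IsRegularSystemOfParameters

end RegularSystemOfParameters

section FiniteLength

variable {A : Type*} [CommRing A] [IsLocalRing A] [IsNoetherianRing A]

theorem isArtinianRing_quotient_maximalIdeal_pow (n : ℕ) :
    IsArtinianRing (A ⧸ maximalIdeal A ^ n) := by
  cases n with
  | zero =>
    rw [pow_zero, Ideal.one_eq_top]
    infer_instance
  | succ n =>
    have := isLocalRing_quotient_of_le_maximalIdeal
      (Ideal.pow_le_self (I := maximalIdeal A) n.succ_ne_zero)
    rw [isArtinianRing_iff_isNilpotent_maximalIdeal]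
    refine ⟨n + 1, ?_⟩
    rw [← map_maximalIdeal_of_surjective _ Ideal.Quotient.mk_surjective, ← Ideal.map_pow,
      Ideal.map_quotient_self, Ideal.zero_eq_bot]

theorem isFiniteLength_quotient_maximalIdeal_pow_smul_top (N : Type*) [AddCommGroup N] [Module A N]
    [Module.Finite A N] (n : ℕ) :
    IsFiniteLength A (N ⧸ (maximalIdeal A ^ n • ⊤ : Submodule A N)) := by
  have := isArtinianRing_quotient_maximalIdeal_pow (A := A) n
  have : Module.Finite (A ⧸ maximalIdeal A ^ n) (N ⧸ (maximalIdeal A ^ n • ⊤ : Submodule A N)) :=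
    .of_restrictScalars_finite A _ _
  exact isFiniteLength_iff_isNoetherian_isArtinian.mpr ⟨inferInstance,
    isArtinian_of_surjective_algebraMap (R := A ⧸ maximalIdeal A ^ n) Ideal.Quotient.mk_surjective⟩

end FiniteLength

section TensorProduct

theorem lTensor_rTensor_apply {A P Q N N' : Type*} [CommSemiring A] [AddCommMonoid P]
    [AddCommMonoid Q] [AddCommMonoid N] [AddCommMonoid N'] [Module A P] [Module A Q] [Module A N]
    [Module A N'] (f : P →ₗ[A] Q) (g : N →ₗ[A] N') (x : P ⊗[A] N) :
    g.lTensor Q (f.rTensor N x) = f.rTensor N' (g.lTensor P x) := by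
  rw [← LinearMap.comp_apply, ← LinearMap.comp_apply, LinearMap.lTensor_comp_rTensor,
    LinearMap.rTensor_comp_lTensor]

theorem flat_of_exact_of_rTensor_injective {A M₁ M₂ M₃ : Type*} [CommRing A] [AddCommGroup M₁]
    [AddCommGroup M₂] [AddCommGroup M₃] [Module A M₁] [Module A M₂] [Module A M₃]
    [Module.Flat A M₂] {f : M₁ →ₗ[A] M₂} {g : M₂ →ₗ[A] M₃} (hfg : Function.Exact f g)
    (hg : Function.Surjective g)
    (hf : ∀ I : Ideal A, Function.Injective (f.rTensor (A ⧸ I))) : Module.Flat A M₃ := by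
  rw [Module.Flat.iff_lTensor_injective']
  intro I
  have exact_I : Function.Exact I.subtype I.mkQ := LinearMap.exact_subtype_mkQ I
  rw [injective_iff_map_eq_zero]
  intro z hz
  obtain ⟨w, rfl⟩ := LinearMap.rTensor_surjective I hg z
  rw [lTensor_rTensor_apply] at hz
  obtain ⟨v, hv⟩ := (rTensor_exact A hfg hg _).1 hz
  have mkQ_v : I.mkQ.lTensor M₁ v = 0 := by
    apply hf I
    rw [← lTensor_rTensor_apply, hv, map_zero]
    exact (lTensor_exact M₂ exact_I I.mkQ_surjective).apply_apply_eq_zero w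
  obtain ⟨t, rfl⟩ := (lTensor_exact M₁ exact_I I.mkQ_surjective _).1 mkQ_v
  rw [← lTensor_rTensor_apply] at hv
  rw [← Module.Flat.lTensor_preserves_injective_linearMap _ I.injective_subtype hv]
  exact (rTensor_exact I hfg hg).apply_apply_eq_zero t

variable {A R M N : Type*} [CommRing A] [CommRing R] [Algebra A R] [AddCommGroup M] [Module A M]
  [Module R M] [IsScalarTower A R M] [AddCommGroup N] [Module A N]

theorem flat_quotSMulTop_of_isSMulRegular_tensorProduct_quotient [Module.Flat A M] {u : R}
    (hu : ∀ I : Ideal A, IsSMulRegular (M ⊗[A] (A ⧸ I)) u) :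
    Module.Flat A (QuotSMulTop u M) := by
  let π : M →ₗ[A] QuotSMulTop u M := (u • ⊤ : Submodule R M).mkQ.restrictScalars A
  have exact_π : Function.Exact (Algebra.lsmul A A M u) π := by
    intro x
    simp [π, Submodule.mem_smul_pointwise_iff_exists]
  have π_surjective : Function.Surjective π := (u • ⊤ : Submodule R M).mkQ_surjective
  refine flat_of_exact_of_rTensor_injective exact_π π_surjective fun I => ?_
  have rTensor_eq_smul : ⇑((Algebra.lsmul A A M u).rTensor (A ⧸ I)) = (u • ·) := by
    ext x
    induction x with
    | zero => rw [map_zero, smul_zero]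
    | tmul m n => rfl
    | add x y hx hy => rw [map_add, hx, hy, smul_add]
  rw [rTensor_eq_smul]
  exact hu I

theorem ker_lTensor_mkQ_smul_top_le (J : Ideal A) :
    LinearMap.ker (TensorProduct.AlgebraTensorModule.lTensor R M (J • ⊤ : Submodule A N).mkQ) ≤
      J.map (algebraMap A R) • ⊤ := by
  have tmul_mem (m : M) (n : N) (hn : n ∈ (J • ⊤ : Submodule A N)) :
      m ⊗ₜ[A] n ∈ (J.map (algebraMap A R) • ⊤ : Submodule R (M ⊗[A] N)) := by
    refine Submodule.smul_induction_on hn (fun j hj n _ => ?_) fun n n' hn hn' => ?_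
    · rw [TensorProduct.tmul_smul, ← algebraMap_smul R j (m ⊗ₜ[A] n)]
      exact Submodule.smul_mem_smul (Ideal.mem_map_of_mem _ hj) trivial
    · rw [TensorProduct.tmul_add]
      exact add_mem hn hn'
  intro x hx
  obtain ⟨y, rfl⟩ := (lTensor_exact M (LinearMap.exact_subtype_mkQ (J • ⊤ : Submodule A N))
    (Submodule.mkQ_surjective _) x).1 hx
  clear hx
  induction y with
  | zero => rw [map_zero]; exact zero_mem _
  | tmul m n => exact tmul_mem m n n.2
  | add y y' hy hy' => rw [map_add]; exact add_mem hy hy'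

end TensorProduct

section Slicing

variable {A R M : Type*} [CommRing A] [IsLocalRing A] [CommRing R] [Algebra A R]
  [AddCommGroup M] [Module A M] [Module R M] [IsScalarTower A R M] [Module.Flat A M]

theorem isSMulRegular_tensorProduct_of_isFiniteLength {u : R}
    (hu : IsSMulRegular (M ⊗[A] (A ⧸ maximalIdeal A)) u) {N : Type*} [AddCommGroup N] [Module A N]
    (hN : IsFiniteLength A N) : IsSMulRegular (M ⊗[A] N) u := by
  induction hN with
  | of_subsingleton => exact fun _ _ _ => Subsingleton.elim _ _
  | @of_simple_quotient N _ _ N' simple _ regular_submodule =>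
    have regular_quotient : IsSMulRegular (M ⊗[A] (N ⧸ N')) u := by
      obtain ⟨m, hm, ⟨e⟩⟩ := isSimpleModule_iff_quot_maximal.mp simple
      obtain rfl := eq_maximalIdeal hm
      exact ((TensorProduct.AlgebraTensorModule.congr (.refl R M) e).isSMulRegular_congr u).mpr hu
    refine isSMulRegular_of_range_eq_ker
      (f := TensorProduct.AlgebraTensorModule.lTensor R M N'.subtype)
      (g := TensorProduct.AlgebraTensorModule.lTensor R M N'.mkQ)
      ?_ ?_ regular_submodule regular_quotient
    · exact Module.Flat.lTensor_preserves_injective_linearMap _ N'.injective_subtype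
    · ext x
      exact (lTensor_exact M (LinearMap.exact_subtype_mkQ N') N'.mkQ_surjective x).symm

variable [IsNoetherianRing A] [IsNoetherianRing R] [Module.Finite R M]

theorem isSMulRegular_tensorProduct_of_finite {u : R}
    (hA : (maximalIdeal A).map (algebraMap A R) ≤ (⊥ : Ideal R).jacobson)
    (hu : IsSMulRegular (M ⊗[A] (A ⧸ maximalIdeal A)) u) (N : Type*) [AddCommGroup N] [Module A N]
    [Module.Finite A N] : IsSMulRegular (M ⊗[A] N) u := by
  rw [isSMulRegular_iff_right_eq_zero_of_smul]
  intro x hx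
  have x_mem_pow (n : ℕ) :
      x ∈ ((maximalIdeal A).map (algebraMap A R) ^ n • ⊤ : Submodule R (M ⊗[A] N)) := by
    rw [← Ideal.map_pow]
    apply ker_lTensor_mkQ_smul_top_le
    apply (isSMulRegular_tensorProduct_of_isFiniteLength hu
      (isFiniteLength_quotient_maximalIdeal_pow_smul_top N n)).right_eq_zero_of_smul
    rw [← map_smul, hx, map_zero]
  have : Module.Finite R (M ⊗[A] N) :=
    .equiv (TensorProduct.AlgebraTensorModule.cancelBaseChange A R R M N)
  rw [← Submodule.mem_bot R, ← Ideal.iInf_pow_smul_eq_bot_of_le_jacobson _ hA, Submodule.mem_iInf]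
  exact x_mem_pow

theorem isSMulRegular_of_isSMulRegular_tensorProduct_quotient_maximalIdeal {u : R}
    (hA : (maximalIdeal A).map (algebraMap A R) ≤ (⊥ : Ideal R).jacobson)
    (hu : IsSMulRegular (M ⊗[A] (A ⧸ maximalIdeal A)) u) : IsSMulRegular M u :=
  ((TensorProduct.AlgebraTensorModule.rid A R M).isSMulRegular_congr u).mp
    (isSMulRegular_tensorProduct_of_finite hA hu A)

theorem isWeaklyRegular_and_flat_of_isWeaklyRegular_fiber {rs : List R}
    (hA : (maximalIdeal A).map (algebraMap A R) ≤ (⊥ : Ideal R).jacobson)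
    (h : IsWeaklyRegular (M ⊗[R] (R ⧸ (maximalIdeal A).map (algebraMap A R))) rs) :
    IsWeaklyRegular M rs ∧ Module.Flat A (M ⧸ (Ideal.ofList rs • ⊤ : Submodule R M)) := by
  induction rs generalizing M with
  | nil =>
    rw [Ideal.ofList_nil, Submodule.bot_smul]
    exact ⟨.nil R M, .of_linearEquiv ((Submodule.quotEquivOfEqBot _ rfl).restrictScalars A)⟩
  | cons u rs ih =>
    obtain ⟨fiber_head, fiber_tail⟩ := (isWeaklyRegular_cons_iff _ _ _).mp h
    let e : M ⊗[R] (R ⧸ (maximalIdeal A).map (algebraMap A R)) ≃ₗ[R] M ⊗[A] (A ⧸ maximalIdeal A) :=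
      (Ideal.qoutMapEquivTensorQout R).lTensor M ≪≫ₗ
        TensorProduct.AlgebraTensorModule.cancelBaseChange A R R M _
    have hu : IsSMulRegular (M ⊗[A] (A ⧸ maximalIdeal A)) u :=
      (e.isSMulRegular_congr u).mp fiber_head
    have : Module.Flat A (QuotSMulTop u M) :=
      flat_quotSMulTop_of_isSMulRegular_tensorProduct_quotient fun I =>
        isSMulRegular_tensorProduct_of_finite hA hu (A ⧸ I)
    obtain ⟨tail_regular, tail_flat⟩ := ih
      (((QuotSMulTop.quotSMulTopTensorEquivQuotSMulTop u _ M).isWeaklyRegular_congr rs).mpr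
        fiber_tail)
    have head_regular : IsSMulRegular M u :=
      isSMulRegular_of_isSMulRegular_tensorProduct_quotient_maximalIdeal hA hu
    exact ⟨.cons head_regular tail_regular, .of_linearEquiv
      ((Submodule.quotOfListConsSMulTopEquivQuotSMulTopInner M u rs).restrictScalars A)⟩

end Slicing

theorem ofList_ofFn {S : Type*} [Semiring S] {n : ℕ} (f : Fin n → S) :
    Ideal.ofList (List.ofFn f) = Ideal.span (Set.range f) := by
  simp only [Ideal.ofList, List.mem_ofFn, Set.range]

theorem isRegular_and_flat_of_isRegularSystemOfParameters_fiber {A R : Type*} [CommRing A]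
    [CommRing R] [IsLocalRing A] [IsLocalRing R] [IsNoetherianRing A] [IsNoetherianRing R]
    [Algebra A R] [IsLocalHom (algebraMap A R)] [Module.Flat A R]
    [IsLocalRing (R ⧸ (maximalIdeal A).map (algebraMap A R))] {rs : List R}
    {cs : List (R ⧸ (maximalIdeal A).map (algebraMap A R))}
    (h : IsRegularSystemOfParameters (rs.map (Ideal.Quotient.mk _) ++ cs)) :
    IsRegular R rs ∧ Module.Flat A (R ⧸ Ideal.ofList rs) := by
  have fiber_regular : IsWeaklyRegular (R ⧸ (maximalIdeal A).map (algebraMap A R)) rs :=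
    (isWeaklyRegular_map_algebraMap_iff _ _ rs).mp
      ((isWeaklyRegular_append_iff _ _ _).mp h.isWeaklyRegular).1
  obtain ⟨regular, flat⟩ := isWeaklyRegular_and_flat_of_isWeaklyRegular_fiber
    ((map_maximalIdeal_le (algebraMap A R)).trans (maximalIdeal_le_jacobson _))
    (((TensorProduct.lid R _).isWeaklyRegular_congr rs).mpr fiber_regular)
  have mem_maximalIdeal (x : R) (hx : x ∈ rs) : x ∈ maximalIdeal R := fun x_unit =>
    h.mem_maximalIdeal (List.mem_append_left _ (List.mem_map_of_mem hx)) (x_unit.map _)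
  rw [smul_eq_mul, Ideal.mul_top] at flat
  exact ⟨(isRegular_iff_isWeaklyRegular_of_subset_maximalIdeal mem_maximalIdeal).mpr regular, flat⟩

/-- elements of a flat local algebra whose images in the regular
fiber ring form part of a regular system of parameters give a regular sequence,
and cutting them out preserves flatness over the base. -/
theorem regular_sequence_of_partial_relative_parameters
    {A R : Type*} [CommRing A] [CommRing R] [IsLocalRing A] [IsLocalRing R]
    [IsNoetherianRing A] [IsNoetherianRing R]
    [Algebra A R] [IsLocalHom (algebraMap A R)] [Module.Flat A R]
    [IsLocalRing (R ⧸ (maximalIdeal A).map (algebraMap A R))]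
    (r : ℕ) (a : Fin r → R)
    -- the images of the `a i` in the fiber ring `R' = R/m_A R` extend to a
    -- generating family of `m_{R'}` of cardinality `dim R'` (a regular system
    -- of parameters of the regular local ring `R'`)
    (hpart : ∃ (s : ℕ) (c : Fin s → R ⧸ (maximalIdeal A).map (algebraMap A R)),
      Ideal.span
          (Set.range (fun i : Fin r =>
              Ideal.Quotient.mk ((maximalIdeal A).map (algebraMap A R)) (a i)) ∪
            Set.range c) =
        maximalIdeal (R ⧸ (maximalIdeal A).map (algebraMap A R)) ∧
      ((r + s : ℕ) : WithBot (WithTop ℕ)) =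
        ringKrullDim (R ⧸ (maximalIdeal A).map (algebraMap A R))) :
    RingTheory.Sequence.IsRegular R (List.ofFn a) ∧
      Module.Flat A (R ⧸ Ideal.span (Set.range a)) := by
  obtain ⟨s, c, span_eq, dim_eq⟩ := hpart
  have parameters : IsRegularSystemOfParameters
      ((List.ofFn a).map (Ideal.Quotient.mk _) ++ List.ofFn c) := by
    constructor
    · rw [Ideal.ofList_append, List.map_ofFn, ofList_ofFn, ofList_ofFn, ← Ideal.span_union]
      exact span_eq
    · rw [← dim_eq, List.length_append, List.length_map, List.length_ofFn, List.length_ofFn]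
      rfl
  rw [← ofList_ofFn]
  exact isRegular_and_flat_of_isRegularSystemOfParameters_fiber parameters
end

section
/- Let k be a field of characteristic zero, R = MvPolynomial (Fin n) k, I a finitely generated ideal with generators f_1, …, f_m, and b ≥ 1. Define Δ^{b−1}(I) to be the ideal generated by all iterated partial derivatives of order at most b−1 of the generators f_1, …, f_m (including the f_j themselves). Then for every k-rational maximal ideal m_a, one has I ⊆ m_a^b if and only if Δ^{b−1}(I) ⊆ m_a; equivalently, the set of k-rational points of order ≥ b of I equals the zero set of Δ^{b−1}(I). -/
open MvPolynomial

/-!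
Translating `a` to the origin commutes with partial derivatives and carries `m_a` to the ideal of
the variables, so powers of `m_a` can be read off from coefficients. There one sees that, as long
as `b!` is a non-zero-divisor, `g ∈ m_a ^ (b + 1)` iff `g ∈ m_a` and every `∂g/∂X_i` lies in
`m_a ^ b`: differentiation lowers degrees by at most one, and a monomial of positive degree is
recovered, up to a positive integer factor, from its derivative in a variable that it contains.
Iterating this criterion `b` times describes `m_a ^ (b + 1)` by derivatives of order at most `b`.
-/

lemma natCast_mem_nonZeroDivisors_of_factorial {R : Type*} [CommSemiring R] {b d : ℕ}
    (hb : (b.factorial : R) ∈ nonZeroDivisors R) (hd : 0 < d) (hdb : d ≤ b) :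
    (d : R) ∈ nonZeroDivisors R := by
  obtain ⟨c, hc⟩ := Nat.dvd_factorial hd hdb
  rw [hc, Nat.cast_mul, mul_mem_nonZeroDivisors] at hb
  exact hb.1

section IdealOfVars

variable {σ R : Type*} [CommSemiring R]

lemma pderiv_mem_pow_idealOfVars {b : ℕ} {g : MvPolynomial σ R}
    (hg : g ∈ idealOfVars σ R ^ (b + 1)) (i : σ) : pderiv i g ∈ idealOfVars σ R ^ b := by
  rw [mem_pow_idealOfVars_iff'] at hg ⊢
  intro x hx
  have hcoeff : g.coeff (x + Finsupp.single i 1) = 0 := hg _ (by simpa using hx)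
  rw [coeff_pderiv, hcoeff, zero_mul]

lemma mem_pow_succ_idealOfVars_of_pderiv {b : ℕ} (hb : (b.factorial : R) ∈ nonZeroDivisors R)
    {g : MvPolynomial σ R} (hg : g ∈ idealOfVars σ R)
    (hpderiv : ∀ i, pderiv i g ∈ idealOfVars σ R ^ b) : g ∈ idealOfVars σ R ^ (b + 1) := by
  rw [mem_pow_idealOfVars_iff']
  intro x hx
  obtain rfl | hx0 := eq_or_ne x 0
  · rw [← pow_one (idealOfVars σ R), mem_pow_idealOfVars_iff'] at hg
    exact hg 0 (by simp)
  obtain ⟨i, hi⟩ : ∃ i, x i ≠ 0 := Finsupp.ne_iff.mp hx0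
  obtain ⟨y, rfl⟩ : ∃ y, x = y + Finsupp.single i 1 :=
    have hle : Finsupp.single i 1 ≤ x :=
      Finsupp.single_le_iff.mpr (Nat.one_le_iff_ne_zero.mpr hi)
    ⟨x - Finsupp.single i 1, (tsub_add_cancel_of_le hle).symm⟩
  have hy : y.degree < b := by simpa using hx
  have hcoeff : g.coeff (y + Finsupp.single i 1) * ((y i + 1 : ℕ) : R) = 0 := by
    rw [Nat.cast_succ, ← coeff_pderiv]
    exact (mem_pow_idealOfVars_iff' _ _).mp (hpderiv i) y hy
  have hregular : ((y i + 1 : ℕ) : R) ∈ nonZeroDivisors R :=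
    natCast_mem_nonZeroDivisors_of_factorial hb (y i).succ_pos ((Finsupp.le_degree i y).trans_lt hy)
  exact (mul_right_mem_nonZeroDivisors_eq_zero_iff hregular).mp hcoeff

end IdealOfVars

section PointIdeal

variable {σ R : Type*} [CommRing R]

/-- The ideal `m_a` of the point `a`, which is maximal when `R` is a field. -/
noncomputable def pointIdeal (a : σ → R) : Ideal (MvPolynomial σ R) :=
  Ideal.span (Set.range fun i => X i - C (a i))

/-- The change of coordinates `g(X) ↦ g(X + a)`, used to move the point `a` to the origin. -/
noncomputable def translateAlgEquiv (a : σ → R) : MvPolynomial σ R ≃ₐ[R] MvPolynomial σ R :=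
  AlgEquiv.ofAlgHom (aeval fun i => X i + C (a i)) (aeval fun i => X i - C (a i))
    (by ext i : 1; simp [algHom_C]) (by ext i : 1; simp [algHom_C])

lemma translateAlgEquiv_X (a : σ → R) (i : σ) :
    translateAlgEquiv a (X i) = X i + C (a i) := by
  simp [translateAlgEquiv]

lemma translateAlgEquiv_C (a : σ → R) (c : R) : translateAlgEquiv a (C c) = C c :=
  (translateAlgEquiv a).commutes c

lemma pderiv_translateAlgEquiv (a : σ → R) (i : σ) (g : MvPolynomial σ R) :
    pderiv i (translateAlgEquiv a g) = translateAlgEquiv a (pderiv i g) := by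
  induction g using MvPolynomial.induction_on with
  | C c => simp only [translateAlgEquiv_C, pderiv_C, map_zero]
  | add p q hp hq => simp only [map_add, hp, hq]
  | mul_X p j hp =>
    have hX : pderiv i (translateAlgEquiv a (X j)) = translateAlgEquiv a (pderiv i (X j)) := by
      obtain rfl | hij := eq_or_ne j i
      · simp [translateAlgEquiv_X]
      · simp [translateAlgEquiv_X, pderiv_X_of_ne hij]
    simp only [map_mul, pderiv_mul, map_add, hp, hX]

lemma map_translateAlgEquiv_pointIdeal (a : σ → R) :
    (pointIdeal a).map (translateAlgEquiv a) = idealOfVars σ R := by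
  have hgen : (translateAlgEquiv a ∘ fun i => X i - C (a i)) = X := by
    funext i
    simp only [Function.comp_apply, map_sub, translateAlgEquiv_X, translateAlgEquiv_C,
      add_sub_cancel_right]
  rw [pointIdeal, Ideal.map_span, ← Set.range_comp, hgen]

lemma translateAlgEquiv_mem_pow_idealOfVars_iff (a : σ → R) (b : ℕ) (g : MvPolynomial σ R) :
    translateAlgEquiv a g ∈ idealOfVars σ R ^ b ↔ g ∈ pointIdeal a ^ b := by
  rw [← map_translateAlgEquiv_pointIdeal a, ← Ideal.map_pow]
  exact Ideal.apply_mem_of_equiv_iff (f := (translateAlgEquiv a).toRingEquiv)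

lemma mem_pow_succ_pointIdeal_iff_pderiv {b : ℕ} (hb : (b.factorial : R) ∈ nonZeroDivisors R)
    (a : σ → R) (g : MvPolynomial σ R) :
    g ∈ pointIdeal a ^ (b + 1) ↔ g ∈ pointIdeal a ∧ ∀ i, pderiv i g ∈ pointIdeal a ^ b := by
  have hone := translateAlgEquiv_mem_pow_idealOfVars_iff a 1 g
  rw [pow_one, pow_one] at hone
  simp only [← hone, ← translateAlgEquiv_mem_pow_idealOfVars_iff, ← pderiv_translateAlgEquiv]
  exact ⟨fun hg => ⟨Ideal.pow_le_self b.succ_ne_zero hg, pderiv_mem_pow_idealOfVars hg⟩,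
    fun ⟨hg, hpderiv⟩ => mem_pow_succ_idealOfVars_of_pderiv hb hg hpderiv⟩

lemma mem_pow_succ_pointIdeal_iff_foldl_pderiv {b : ℕ}
    (hb : (b.factorial : R) ∈ nonZeroDivisors R) (a : σ → R) (g : MvPolynomial σ R) :
    g ∈ pointIdeal a ^ (b + 1) ↔
      ∀ l : List σ, l.length ≤ b → l.foldl (fun h i => pderiv i h) g ∈ pointIdeal a := by
  induction b generalizing g with
  | zero => simp
  | succ b ih =>
    have hb' : (b.factorial : R) ∈ nonZeroDivisors R := by
      rw [Nat.factorial_succ, Nat.cast_mul, mul_mem_nonZeroDivisors] at hb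
      exact hb.2
    simp only [mem_pow_succ_pointIdeal_iff_pderiv hb, ih hb']
    constructor
    · rintro ⟨hg, hpderiv⟩ (_ | ⟨i, l⟩) hl
      · exact hg
      · exact hpderiv i l (Nat.le_of_succ_le_succ hl)
    · exact fun h => ⟨h [] (Nat.zero_le _), fun i l hl => h (i :: l) (Nat.succ_le_succ hl)⟩

end PointIdeal

section DeltaIdeal

variable {σ R ι : Type*}

/-- The ideal `Δ^b(f)` generated by the iterated partial derivatives of order at most `b` of the
polynomials `f j`. A list of variables records the order of differentiation. -/
noncomputable def deltaIdeal [CommSemiring R] (b : ℕ) (f : ι → MvPolynomial σ R) :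
    Ideal (MvPolynomial σ R) :=
  Ideal.span {g | ∃ (j : ι) (l : List σ), l.length ≤ b ∧
    g = l.foldl (fun h i => pderiv i h) (f j)}

lemma deltaIdeal_le_iff [CommSemiring R] {b : ℕ} {f : ι → MvPolynomial σ R}
    {J : Ideal (MvPolynomial σ R)} :
    deltaIdeal b f ≤ J ↔
      ∀ j, ∀ l : List σ, l.length ≤ b → l.foldl (fun h i => pderiv i h) (f j) ∈ J := by
  rw [deltaIdeal, Ideal.span_le]
  exact ⟨fun h j l hl => h ⟨j, l, hl, rfl⟩, by rintro h _ ⟨j, l, hl, rfl⟩; exact h j l hl⟩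

theorem order_ge_iff_delta_le_maximal_general [CommRing R] {b : ℕ} (hb : 1 ≤ b)
    (hfactorial : ((b - 1).factorial : R) ∈ nonZeroDivisors R)
    (f : ι → MvPolynomial σ R) (a : σ → R) :
    Ideal.span (Set.range f) ≤ pointIdeal a ^ b ↔ deltaIdeal (b - 1) f ≤ pointIdeal a := by
  obtain ⟨c, rfl⟩ := Nat.exists_eq_add_of_le' hb
  rw [Nat.add_sub_cancel] at hfactorial ⊢
  simp only [Ideal.span_le, Set.range_subset_iff, SetLike.mem_coe, deltaIdeal_le_iff,
    mem_pow_succ_pointIdeal_iff_foldl_pderiv hfactorial]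

end DeltaIdeal

/-- for a finitely generated ideal `I = (f_1, …, f_m)` and the
ideal `Δ^{b−1}(I)` generated by all iterated partial derivatives of order at
most `b−1` of the generators, a rational point has order ≥ b for `I` iff all
those derivatives vanish there, i.e. iff `Δ^{b−1}(I) ⊆ m_a`. -/
theorem order_ge_iff_delta_le_maximal
    {k : Type*} [Field k] [CharZero k] (n m b : ℕ) (hb : 1 ≤ b)
    (f : Fin m → MvPolynomial (Fin n) k) (a : Fin n → k) :
    Ideal.span (Set.range f) ≤
        (Ideal.span (Set.range fun i : Fin n => X i - C (a i))) ^ b ↔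
      Ideal.span {g | ∃ (j : Fin m) (l : List (Fin n)), l.length ≤ b - 1 ∧
          g = l.foldl (fun h i => pderiv i h) (f j)} ≤
        Ideal.span (Set.range fun i : Fin n => X i - C (a i)) :=
  order_ge_iff_delta_le_maximal_general hb
    (mem_nonZeroDivisors_of_ne_zero (Nat.cast_ne_zero.mpr (b - 1).factorial_ne_zero)) f a
end
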